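/- For every r ∈ Ω, the Jacobian matrix L(r) = (∂K_i/∂u_j)_{1≤i,j≤N} is symmetric and positive semi-definite, has rank N−1, and its kernel is exactly the one-dimensional linear space spanned by the vector 𝟙 = (1,…,1)^T. -/

import Mathlib

/-!
The Jacobian `L` is a weighted graph Laplacian whose weights may be negative on individual
edges; positivity has to be obtained face by face.

*One face.* In a triangle with squared sides `s₁, s₂, s₃` and squared radii `R₁, R₂, R₃`, the
derivative `∂θ₁/∂u₂` equals `conduct s₁ s₂ s₃ R₁ R₂ R₃ / √heron s₁ s₂ s₃`, which is symmetric under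
exchange of the vertices 1 and 2 (`hasDerivAt_cosAng`, `wt_symm`). Scaling invariance determines
the diagonal entries, so the angle Jacobian of a face is minus the 3 × 3 Laplacian with weights
`b₁₂, b₁₃, b₂₃`. Its principal 2 × 2 minors all equal `b₁₂ b₁₃ + b₁₂ b₂₃ + b₁₃ b₂₃`, and
`conduct_identity` expresses this as a positive multiple of a sum of products of the quantities
`s_k + R_i - R_j = 2 r_i (r_i + r_j I_ij)`, which are positive because `I ≥ 0`. At the vertex
opposite to a longest side the diagonal entry is positive as well, since the other two angles
are acute (`conduct_star`). Hence the quadratic form of a face is nonnegative and vanishes only on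
vectors constant on the face (`conduct_form_pos`).

*All faces.* Summing over the faces, `L` is the Laplacian of `edgeWt` (`hasDerivAt_K`) and its
quadratic form is a positive multiple of the sum of the face forms (`energy_by_faces`). It is
therefore nonnegative, and a vector on which it vanishes is constant on every face, hence constant
because the 1-skeleton is connected (`eq_of_energy_zero`). The kernel is thus spanned by `𝟙`, and
the rank follows from rank-nullity.
-/


open Real Filter Topology

namespace IDCP

variable {N : ℕ}

/-- The set of edges: 2-element subsets of vertices contained in some face. -/
def edges (Fc : Finset (Finset (Fin N))) : Finset (Finset (Fin N)) :=
  Fc.biUnion fun f => f.powersetCard 2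

/-- `Fc` is the face set of a triangulation of a closed connected surface:
every face has 3 vertices, every edge lies in exactly two faces, and the
1-skeleton is connected. -/
structure IsTriangulation (Fc : Finset (Finset (Fin N))) : Prop where
  card3 : ∀ f ∈ Fc, f.card = 3
  edge2 : ∀ e ∈ edges Fc, (Fc.filter fun f => e ⊆ f).card = 2
  conn : (SimpleGraph.fromRel fun i j => ({i, j} : Finset (Fin N)) ∈ edges Fc).Connected

/-- Euler characteristic χ(M) = N − |E| + |F|. -/
def chi (Fc : Finset (Finset (Fin N))) : ℤ :=
  (N : ℤ) - ((edges Fc).card : ℤ) + (Fc.card : ℤ)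

/-- Edge length l_ij = √(r_i² + r_j² + 2 r_i r_j I_{ij}). -/
noncomputable def len (I : Finset (Fin N) → ℝ) (r : Fin N → ℝ) (i j : Fin N) : ℝ :=
  Real.sqrt (r i ^ 2 + r j ^ 2 + 2 * r i * r j * I {i, j})

/-- The cosine of the inner angle at `i` in triangle `{i,j,k}`. -/
noncomputable def cosAng (I : Finset (Fin N) → ℝ) (r : Fin N → ℝ) (i j k : Fin N) : ℝ :=
  (len I r i j ^ 2 + len I r i k ^ 2 - len I r j k ^ 2) / (2 * len I r i j * len I r i k)

/-- The auxiliary function Λ. -/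
noncomputable def Lam (x : ℝ) : ℝ :=
  if x ≤ -1 then π else if x ≤ 1 then Real.arccos x else 0

/-- Discrete Gaussian curvature K_i = 2π − Σ_{{i,j,k}∈F} θ_i^{jk}.  Every face
containing `i` appears exactly twice (once for each ordering of `j,k`), whence
the factor 1/2. -/
noncomputable def K (Fc : Finset (Finset (Fin N))) (I : Finset (Fin N) → ℝ)
    (r : Fin N → ℝ) (i : Fin N) : ℝ :=
  2 * π - (1 / 2) * ∑ j, ∑ k,
    (if ({i, j, k} : Finset (Fin N)) ∈ Fc then Real.arccos (cosAng I r i j k) else 0)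

/-- Extended curvature K̃_i = 2π − Σ θ̃_i^{jk}, using the generalized angles Λ. -/
noncomputable def Kt (Fc : Finset (Finset (Fin N))) (I : Finset (Fin N) → ℝ)
    (r : Fin N → ℝ) (i : Fin N) : ℝ :=
  2 * π - (1 / 2) * ∑ j, ∑ k,
    (if ({i, j, k} : Finset (Fin N)) ∈ Fc then Lam (cosAng I r i j k) else 0)

/-- The set Ω of inversive distance circle packing metrics. -/
def Omega (Fc : Finset (Finset (Fin N))) (I : Finset (Fin N) → ℝ) : Set (Fin N → ℝ) :=
  {r | (∀ i, 0 < r i) ∧ ∀ i j k : Fin N, ({i, j, k} : Finset (Fin N)) ∈ Fc →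
    len I r j k < len I r i j + len I r i k}

/-- s_α = 2πχ(M)/‖r‖_α^α. -/
noncomputable def sA (Fc : Finset (Finset (Fin N))) (α : ℝ) (r : Fin N → ℝ) : ℝ :=
  2 * π * (chi Fc : ℝ) / ∑ j, r j ^ α

/-- Back from u-coordinates: r_i = e^{u_i}. -/
noncomputable def rOf (u : Fin N → ℝ) : Fin N → ℝ := fun i => Real.exp (u i)

/-- ln Ω, the image of Ω under the coordinate change r ↦ u, u_i = ln r_i. -/
def lnOmega (Fc : Finset (Finset (Fin N))) (I : Finset (Fin N) → ℝ) : Set (Fin N → ℝ) :=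
  {u | rOf u ∈ Omega Fc I}

/-- `u` solves the α-flow du_i/dt = s_α r_i^α − K_i on the time set `D`,
staying in ln Ω. -/
def IsFlowSol (Fc : Finset (Finset (Fin N))) (I : Finset (Fin N) → ℝ) (α : ℝ)
    (D : Set ℝ) (u : ℝ → Fin N → ℝ) : Prop :=
  ∀ t ∈ D, rOf (u t) ∈ Omega Fc I ∧
    ∀ i, HasDerivWithinAt (fun s => u s i)
      (sA Fc α (rOf (u t)) * rOf (u t) i ^ α - K Fc I (rOf (u t)) i) D t

/-- `u` solves the extended α-flow du_i/dt = s_α r_i^α − K̃_i on the time set `D`. -/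
def IsExtFlowSol (Fc : Finset (Finset (Fin N))) (I : Finset (Fin N) → ℝ) (α : ℝ)
    (D : Set ℝ) (u : ℝ → Fin N → ℝ) : Prop :=
  ∀ t ∈ D, ∀ i, HasDerivWithinAt (fun s => u s i)
      (sA Fc α (rOf (u t)) * rOf (u t) i ^ α - Kt Fc I (rOf (u t)) i) D t

/-- Lk(A): pairs (e,v) with both endpoints of e outside A, v ∈ A, and e,v spanning a face. -/
def Lk (Fc : Finset (Finset (Fin N))) (A : Finset (Fin N)) :
    Finset (Finset (Fin N) × Fin N) :=
  ((edges Fc) ×ˢ (Finset.univ : Finset (Fin N))).filter fun p =>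
    (∀ x ∈ p.1, x ∉ A) ∧ p.2 ∈ A ∧ insert p.2 p.1 ∈ Fc

/-- Euler characteristic χ(F_A) of the subcomplex spanned by A. -/
def chiSub (Fc : Finset (Finset (Fin N))) (A : Finset (Fin N)) : ℤ :=
  (A.card : ℤ) - (((edges Fc).filter (fun e => e ⊆ A)).card : ℤ)
    + ((Fc.filter (fun f => f ⊆ A)).card : ℤ)

/-- The lower bound −Σ_{(e,v)∈Lk(A)}(π − Λ(I_e)) + 2πχ(F_A) defining Y_A. -/
noncomputable def Ybound (Fc : Finset (Finset (Fin N))) (I : Finset (Fin N) → ℝ)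
    (A : Finset (Fin N)) : ℝ :=
  -(∑ p ∈ Lk Fc A, (π - Lam (I p.1))) + 2 * π * (chiSub Fc A : ℝ)

/-- x ∈ Y. -/
noncomputable def memY (Fc : Finset (Finset (Fin N))) (I : Finset (Fin N) → ℝ)
    (x : Fin N → ℝ) : Prop :=
  (∑ i, x i) = 2 * π * (chi Fc : ℝ) ∧
    ∀ A : Finset (Fin N), A.Nonempty → A ≠ Finset.univ → Ybound Fc I A < ∑ i ∈ A, x i

/-- x ∈ Ȳ. -/
noncomputable def memYbar (Fc : Finset (Finset (Fin N))) (I : Finset (Fin N) → ℝ)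
    (x : Fin N → ℝ) : Prop :=
  (∑ i, x i) = 2 * π * (chi Fc : ℝ) ∧
    ∀ A : Finset (Fin N), A.Nonempty → A ≠ Finset.univ → Ybound Fc I A ≤ ∑ i ∈ A, x i

/-! ### Angles and their derivatives in one triangle -/

/-- Sixteen times the squared area of the triangle whose squared side lengths are
`a`, `b`, `c`. -/
def heron (a b c : ℝ) : ℝ := 2 * (a * b + b * c + a * c) - a ^ 2 - b ^ 2 - c ^ 2

/-- The derivative `∂θ₁/∂u₂` multiplied by `√(heron s₁ s₂ s₃)`, in a triangle with squared side
lengths `s₁, s₂, s₃` (side `k` lying opposite to vertex `k`) and squared radii `R₁, R₂, R₃`. -/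
noncomputable def conduct (s₁ s₂ s₃ R₁ R₂ R₃ : ℝ) : ℝ :=
  (s₁ + s₂ - s₃) / 2 + (R₁ + R₂) / 2 - R₃ + (s₂ - s₁) * (R₂ - R₁) / (2 * s₃)

/-- Heron's formula. -/
theorem heron_factor (x y z : ℝ) : heron (x ^ 2) (y ^ 2) (z ^ 2) =
    (x + y + z) * (z + y - x) * (z + x - y) * (y + x - z) := by
  unfold heron; ring

/-- Differentiated law of cosines: `dθ` for the angle opposite to the side `x`, as a combination of
`dx`, `dy`, `dz`. The strict triangle inequalities keep the cosine inside `(-1, 1)`, where `arccos` is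
differentiable. -/
theorem hasDerivAt_angle {x y z : ℝ → ℝ} {x' y' z' t : ℝ}
    (hx : HasDerivAt x x' t) (hy : HasDerivAt y y' t) (hz : HasDerivAt z z' t)
    (px : 0 < x t) (py : 0 < y t) (pz : 0 < z t)
    (h1 : x t < z t + y t) (h2 : y t < z t + x t) (h3 : z t < y t + x t) :
    HasDerivAt (fun s => Real.arccos ((z s ^ 2 + y s ^ 2 - x s ^ 2) / (2 * z s * y s)))
      ((2 * x t * x' - (x t ^ 2 + y t ^ 2 - z t ^ 2) / y t * y'
          - (x t ^ 2 + z t ^ 2 - y t ^ 2) / z t * z') /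
        √(heron (x t ^ 2) (y t ^ 2) (z t ^ 2))) t := by
  have hQ : 0 < heron (x t ^ 2) (y t ^ 2) (z t ^ 2) := by
    rw [heron_factor]
    have := sub_pos.2 h1
    have := sub_pos.2 h2
    have := sub_pos.2 h3
    positivity
  set c := (z t ^ 2 + y t ^ 2 - x t ^ 2) / (2 * z t * y t) with hc
  have hsq : 1 - c ^ 2 = heron (x t ^ 2) (y t ^ 2) (z t ^ 2) / (2 * z t * y t) ^ 2 := by
    rw [hc]; unfold heron; field_simp; ring
  have hlt : c ^ 2 < 1 := by
    have : 0 < 1 - c ^ 2 := by rw [hsq]; positivity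
    linarith
  have hb := abs_lt.1 ((sq_lt_one_iff_abs_lt_one c).1 hlt)
  have hroot : √(1 - c ^ 2) = √(heron (x t ^ 2) (y t ^ 2) (z t ^ 2)) / (2 * z t * y t) := by
    rw [hsq, Real.sqrt_div hQ.le, Real.sqrt_sq (by positivity)]
  have hfrac := (((hz.fun_pow 2).fun_add (hy.fun_pow 2)).fun_sub (hx.fun_pow 2)).fun_div
    ((hz.const_mul 2).fun_mul hy) (by positivity)
  have hac := (Real.hasDerivAt_arccos hb.1.ne' hb.2.ne).comp t hfrac
  refine hac.congr_deriv ?_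
  rw [hroot]
  have : 0 < √(heron (x t ^ 2) (y t ^ 2) (z t ^ 2)) := Real.sqrt_pos.2 hQ
  field_simp
  ring

/-- Derivative of an edge length when the radii `p`, `q` have logarithmic derivatives `v`, `w`. -/
theorem hasDerivAt_edge {p q : ℝ → ℝ} {v w t J : ℝ}
    (hp : HasDerivAt p (p t * v) t) (hq : HasDerivAt q (q t * w) t)
    (pp : 0 < p t) (pq : 0 < q t) (hJ : 0 ≤ J) :
    HasDerivAt (fun s => √(p s ^ 2 + q s ^ 2 + 2 * p s * q s * J))
      (((p t ^ 2 + p t * q t * J) * v + (q t ^ 2 + p t * q t * J) * w) /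
        √(p t ^ 2 + q t ^ 2 + 2 * p t * q t * J)) t := by
  have hpos : 0 < p t ^ 2 + q t ^ 2 + 2 * p t * q t * J := by positivity
  have h := (((hp.fun_pow 2).fun_add (hq.fun_pow 2)).fun_add
    (((hp.const_mul 2).fun_mul hq).mul_const J)).sqrt hpos.ne'
  refine h.congr_deriv ?_
  have := Real.sqrt_pos.2 hpos
  field_simp
  ring

/-! ### Positivity of the quadratic form of one face -/

/-- The common principal minor of the Laplacian of a face. -/
theorem conduct_identity {s₁ s₂ s₃ : ℝ} (R₁ R₂ R₃ : ℝ)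
    (h₁ : s₁ ≠ 0) (h₂ : s₂ ≠ 0) (h₃ : s₃ ≠ 0) :
    conduct s₁ s₂ s₃ R₁ R₂ R₃ * conduct s₁ s₃ s₂ R₁ R₃ R₂ +
      conduct s₁ s₂ s₃ R₁ R₂ R₃ * conduct s₂ s₃ s₁ R₂ R₃ R₁ +
      conduct s₁ s₃ s₂ R₁ R₃ R₂ * conduct s₂ s₃ s₁ R₂ R₃ R₁ =
    heron s₁ s₂ s₃ * ((s₁ + R₂ - R₃) * (s₂ + R₃ - R₁) * (s₃ + R₁ - R₂) +
      (s₁ + R₃ - R₂) * (s₂ + R₁ - R₃) * (s₃ + R₂ - R₁)) / (8 * (s₁ * s₂ * s₃)) := by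
  unfold conduct heron
  field_simp
  ring

/-- The diagonal entry at vertex 1. The factors `s₁ + s₂ - s₃` and `s₁ + s₃ - s₂` have the signs of the
cosines of the angles at vertices 3 and 2. -/
theorem conduct_star {s₁ s₂ s₃ : ℝ} (R₁ R₂ R₃ : ℝ) (h₂ : s₂ ≠ 0) (h₃ : s₃ ≠ 0) :
    conduct s₁ s₂ s₃ R₁ R₂ R₃ + conduct s₁ s₃ s₂ R₁ R₃ R₂ =
      (s₁ + s₂ - s₃) * (s₂ + R₁ - R₃) / (2 * s₂) +
      (s₁ + s₃ - s₂) * (s₃ + R₁ - R₂) / (2 * s₃) := by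
  unfold conduct
  field_simp
  ring

theorem conduct_swap (s₁ s₂ s₃ R₁ R₂ R₃ : ℝ) :
    conduct s₂ s₁ s₃ R₂ R₁ R₃ = conduct s₁ s₂ s₃ R₁ R₂ R₃ := by
  unfold conduct; ring

theorem heron_swap₁₂ (a b c : ℝ) : heron b a c = heron a b c := by unfold heron; ring

theorem heron_swap₂₃ (a b c : ℝ) : heron a c b = heron a b c := by unfold heron; ring

/-- Completing the square at a vertex whose diagonal entry is `a + b`. -/
theorem star_form_pos {a b c : ℝ} (hW : 0 < a + b) (hD : 0 < a * b + a * c + b * c)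
    (x y z : ℝ) :
    0 ≤ a * (x - y) ^ 2 + b * (x - z) ^ 2 + c * (y - z) ^ 2 ∧
      (a * (x - y) ^ 2 + b * (x - z) ^ 2 + c * (y - z) ^ 2 = 0 → x = y ∧ x = z) := by
  have key : (a + b) * (a * (x - y) ^ 2 + b * (x - z) ^ 2 + c * (y - z) ^ 2) =
      ((a + b) * x - a * y - b * z) ^ 2 + (a * b + a * c + b * c) * (y - z) ^ 2 := by ring
  constructor
  · refine nonneg_of_mul_nonneg_right ?_ hW
    rw [key]; positivity
  · intro h
    rw [h, mul_zero] at key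
    have h1 := sq_nonneg ((a + b) * x - a * y - b * z)
    have h2 : 0 ≤ (a * b + a * c + b * c) * (y - z) ^ 2 := by positivity
    have h3 : (a * b + a * c + b * c) * (y - z) ^ 2 = 0 := by linarith
    have hyz : y = z :=
      sub_eq_zero.1 (pow_eq_zero_iff two_ne_zero |>.1 ((mul_eq_zero.1 h3).resolve_left hD.ne'))
    subst hyz
    have h4 : ((a + b) * (x - y)) ^ 2 = 0 := by
      rw [← show (a + b) * x - a * y - b * y = (a + b) * (x - y) by ring]; linarith
    have h5 := pow_eq_zero_iff two_ne_zero |>.1 h4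
    have : x = y := sub_eq_zero.1 ((mul_eq_zero.1 h5).resolve_left hW.ne')
    exact ⟨this, this⟩

theorem conduct_form_pos {s₁ s₂ s₃ R₁ R₂ R₃ : ℝ} (h₁ : 0 < s₁) (h₂ : 0 < s₂) (h₃ : 0 < s₃)
    (h₁₂ : 0 < s₁ + R₂ - R₃) (h₁₃ : 0 < s₁ + R₃ - R₂)
    (h₂₁ : 0 < s₂ + R₁ - R₃) (h₂₃ : 0 < s₂ + R₃ - R₁)
    (h₃₁ : 0 < s₃ + R₁ - R₂) (h₃₂ : 0 < s₃ + R₂ - R₁)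
    (hQ : 0 < heron s₁ s₂ s₃) (x y z : ℝ) :
    0 ≤ conduct s₁ s₂ s₃ R₁ R₂ R₃ * (x - y) ^ 2 + conduct s₁ s₃ s₂ R₁ R₃ R₂ * (x - z) ^ 2
        + conduct s₂ s₃ s₁ R₂ R₃ R₁ * (y - z) ^ 2 ∧
      (conduct s₁ s₂ s₃ R₁ R₂ R₃ * (x - y) ^ 2 + conduct s₁ s₃ s₂ R₁ R₃ R₂ * (x - z) ^ 2
        + conduct s₂ s₃ s₁ R₂ R₃ R₁ * (y - z) ^ 2 = 0 → x = y ∧ x = z) := by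
  have hD := conduct_identity R₁ R₂ R₃ h₁.ne' h₂.ne' h₃.ne'
  have hDpos : 0 < heron s₁ s₂ s₃ * ((s₁ + R₂ - R₃) * (s₂ + R₃ - R₁) * (s₃ + R₁ - R₂) +
      (s₁ + R₃ - R₂) * (s₂ + R₁ - R₃) * (s₃ + R₂ - R₁)) / (8 * (s₁ * s₂ * s₃)) := by
    positivity
  rw [← hD] at hDpos
  have e1 := conduct_star R₁ R₂ R₃ h₂.ne' h₃.ne' (s₁ := s₁)
  have e2 := conduct_star R₂ R₁ R₃ h₁.ne' h₃.ne' (s₁ := s₂)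
  have e3 := conduct_star R₃ R₁ R₂ h₁.ne' h₂.ne' (s₁ := s₃)
  rw [conduct_swap] at e2
  rw [conduct_swap, conduct_swap s₂ s₃] at e3
  set a := conduct s₁ s₂ s₃ R₁ R₂ R₃
  set b := conduct s₁ s₃ s₂ R₁ R₃ R₂
  set c := conduct s₂ s₃ s₁ R₂ R₃ R₁
  -- The vertex opposite to a longest side is the pivot, so that the other two angles are acute.
  by_cases c1 : s₂ ≤ s₁ ∧ s₃ ≤ s₁
  · obtain ⟨c1, c2⟩ := c1
    have p1 : 0 < s₁ + s₂ - s₃ := by linarith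
    have p2 : 0 < s₁ + s₃ - s₂ := by linarith
    exact star_form_pos (by rw [e1]; positivity) hDpos x y z
  by_cases c2 : s₁ ≤ s₂ ∧ s₃ ≤ s₂
  · obtain ⟨c1, c2⟩ := c2
    have p1 : 0 < s₂ + s₁ - s₃ := by linarith
    have p2 : 0 < s₂ + s₃ - s₁ := by linarith
    have := star_form_pos (a := a) (b := c) (c := b) (by rw [e2]; positivity) (by linarith) y x z
    have e : a * (y - x) ^ 2 + c * (y - z) ^ 2 + b * (x - z) ^ 2 =
      a * (x - y) ^ 2 + b * (x - z) ^ 2 + c * (y - z) ^ 2 := by ring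
    rw [e] at this
    exact ⟨this.1, fun h => ⟨(this.2 h).1.symm, (this.2 h).1.symm.trans (this.2 h).2⟩⟩
  · have c3 : s₁ ≤ s₃ ∧ s₂ ≤ s₃ := by
      rw [not_and_or, not_le, not_le] at c1 c2
      constructor <;> rcases c1 with c1 | c1 <;> rcases c2 with c2 | c2 <;> linarith
    obtain ⟨c1, c2⟩ := c3
    have p1 : 0 < s₃ + s₁ - s₂ := by linarith
    have p2 : 0 < s₃ + s₂ - s₁ := by linarith
    have := star_form_pos (a := b) (b := c) (c := a) (by rw [e3]; positivity) (by linarith) z x y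
    have e : b * (z - x) ^ 2 + c * (z - y) ^ 2 + a * (x - y) ^ 2 =
      a * (x - y) ^ 2 + b * (x - z) ^ 2 + c * (y - z) ^ 2 := by ring
    rw [e] at this
    exact ⟨this.1, fun h => ⟨(this.2 h).1.symm.trans (this.2 h).2, (this.2 h).1.symm⟩⟩

/-! ### Faces of the triangulation -/

/-- The squared edge length `l_ij²`. -/
def sqLen (I : Finset (Fin N) → ℝ) (r : Fin N → ℝ) (i j : Fin N) : ℝ :=
  r i ^ 2 + r j ^ 2 + 2 * r i * r j * I {i, j}

theorem sqLen_comm (I : Finset (Fin N) → ℝ) (r : Fin N → ℝ) (i j : Fin N) :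
    sqLen I r i j = sqLen I r j i := by
  unfold sqLen; rw [Finset.pair_comm]; ring

theorem len_comm (I : Finset (Fin N) → ℝ) (r : Fin N → ℝ) (i j : Fin N) :
    len I r i j = len I r j i := by
  unfold len; rw [Finset.pair_comm]; congr 1; ring

/-- The weight of the edge `{i,j}` in the face `{i,j,k}`: the derivative `∂θ_i^{jk}/∂u_j` of the angle
at `i`, given by a formula in the radii. -/
noncomputable def wt (I : Finset (Fin N) → ℝ) (r : Fin N → ℝ) (i j k : Fin N) : ℝ :=
  conduct (sqLen I r j k) (sqLen I r i k) (sqLen I r i j) (r i ^ 2) (r j ^ 2) (r k ^ 2) /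
    √(heron (sqLen I r j k) (sqLen I r i k) (sqLen I r i j))

theorem wt_symm (I : Finset (Fin N) → ℝ) (r : Fin N → ℝ) (i j k : Fin N) :
    wt I r i j k = wt I r j i k := by
  unfold wt
  rw [conduct_swap, heron_swap₁₂, sqLen_comm I r i j]

theorem face_ne {Fc : Finset (Finset (Fin N))} (hT : IsTriangulation Fc) {i j k : Fin N}
    (h : ({i, j, k} : Finset (Fin N)) ∈ Fc) : i ≠ j ∧ i ≠ k ∧ j ≠ k := by
  have h3 := hT.card3 _ h
  refine ⟨?_, ?_, ?_⟩ <;> rintro rfl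
  · have := Finset.card_le_two (a := i) (b := k); simp at h3; omega
  · have := Finset.card_le_two (a := i) (b := j); rw [Finset.pair_comm j i] at h3; simp at h3; omega
  · have := Finset.card_le_two (a := i) (b := j); simp at h3; omega

theorem mem_edges_of_face {Fc : Finset (Finset (Fin N))} (hT : IsTriangulation Fc)
    {i j k : Fin N} (h : ({i, j, k} : Finset (Fin N)) ∈ Fc) :
    ({i, j} : Finset (Fin N)) ∈ edges Fc := by
  refine Finset.mem_biUnion.2 ⟨_, h, Finset.mem_powersetCard.2 ⟨?_, ?_⟩⟩
  · intro a ha; simp at ha ⊢; tauto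
  · exact Finset.card_pair (face_ne hT h).1

theorem face_rot {i j k : Fin N} : ({j, k, i} : Finset (Fin N)) = {i, j, k} := by
  ext; simp; tauto

theorem face_swap₁₂ {i j k : Fin N} : ({j, i, k} : Finset (Fin N)) = {i, j, k} := by
  ext; simp; tauto

theorem face_swap₂₃ {i j k : Fin N} : ({i, k, j} : Finset (Fin N)) = {i, j, k} := by
  ext; simp; tauto

section Face

variable {Fc : Finset (Finset (Fin N))} {I : Finset (Fin N) → ℝ} {i j k : Fin N}

theorem inv_nonneg_of_face (hT : IsTriangulation Fc) (hI : ∀ e ∈ edges Fc, 0 ≤ I e)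
    (h : ({i, j, k} : Finset (Fin N)) ∈ Fc) : 0 ≤ I {i, j} ∧ 0 ≤ I {i, k} ∧ 0 ≤ I {j, k} :=
  ⟨hI _ (mem_edges_of_face hT h), hI _ (mem_edges_of_face hT (face_swap₂₃ ▸ h)),
    hI _ (mem_edges_of_face hT (face_rot (i := i) (j := j) (k := k) ▸ h))⟩

theorem sqLen_pos {r : Fin N → ℝ} (hr : ∀ m, 0 < r m) (h : 0 ≤ I {i, j}) :
    0 < sqLen I r i j := by
  have := hr i; have := hr j
  unfold sqLen; positivity

theorem len_sq {r : Fin N → ℝ} (hr : ∀ m, 0 < r m) (h : 0 ≤ I {i, j}) :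
    len I r i j ^ 2 = sqLen I r i j :=
  Real.sq_sqrt (sqLen_pos hr h).le

theorem len_pos {r : Fin N → ℝ} (hr : ∀ m, 0 < r m) (h : 0 ≤ I {i, j}) :
    0 < len I r i j :=
  Real.sqrt_pos.2 (sqLen_pos hr h)

/-- Derivative of the angle at `i` along a path of radii with logarithmic derivatives `v`. -/
theorem hasDerivAt_cosAng (hT : IsTriangulation Fc) (hI : ∀ e ∈ edges Fc, 0 ≤ I e)
    (h : ({i, j, k} : Finset (Fin N)) ∈ Fc) {ρ : ℝ → Fin N → ℝ} {v : Fin N → ℝ} {t : ℝ}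
    (hρ : ρ t ∈ Omega Fc I) (hd : ∀ m, HasDerivAt (fun s => ρ s m) (ρ t m * v m) t) :
    HasDerivAt (fun s => Real.arccos (cosAng I (ρ s) i j k))
      (wt I (ρ t) i j k * (v j - v i) + wt I (ρ t) i k j * (v k - v i)) t := by
  obtain ⟨hij, hik, hjk⟩ := inv_nonneg_of_face hT hI h
  obtain ⟨hp, htri⟩ := hρ
  have t1 := htri i j k h
  have t2 := htri j i k (face_swap₁₂ ▸ h)
  have t3 := htri k i j (face_rot ▸ h)
  rw [len_comm I _ j i] at t2
  rw [len_comm I _ k i, len_comm I _ k j] at t3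
  have key := hasDerivAt_angle (hasDerivAt_edge (hd j) (hd k) (hp j) (hp k) hjk)
    (hasDerivAt_edge (hd i) (hd k) (hp i) (hp k) hik)
    (hasDerivAt_edge (hd i) (hd j) (hp i) (hp j) hij)
    (len_pos hp hjk) (len_pos hp hik) (len_pos hp hij) t1 t2 t3
  refine key.congr_deriv ?_
  -- Unfolded, `len` is the square root that `hasDerivAt_edge` produces.
  change (2 * len I (ρ t) j k * (_ / len I (ρ t) j k) -
    (len I (ρ t) j k ^ 2 + len I (ρ t) i k ^ 2 - len I (ρ t) i j ^ 2) / len I (ρ t) i k *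
      (_ / len I (ρ t) i k) -
    (len I (ρ t) j k ^ 2 + len I (ρ t) i j ^ 2 - len I (ρ t) i k ^ 2) / len I (ρ t) i j *
      (_ / len I (ρ t) i j)) /
    √(heron (len I (ρ t) j k ^ 2) (len I (ρ t) i k ^ 2) (len I (ρ t) i j ^ 2)) = _
  have hx := len_pos hp hjk
  have hy := len_pos hp hik
  have hz := len_pos hp hij
  rw [mul_assoc, mul_div_cancel₀ _ hx.ne', div_mul_div_comm, div_mul_div_comm, ← sq, ← sq,
    len_sq hp hjk, len_sq hp hik, len_sq hp hij]
  unfold wt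
  rw [sqLen_comm I _ k j, heron_swap₂₃ _ (sqLen I (ρ t) i k), ← mul_div_right_comm,
    ← mul_div_right_comm, ← add_div]
  congr 1
  have q1 := (sqLen_pos hp hjk).ne'
  have q2 := (sqLen_pos hp hik).ne'
  have q3 := (sqLen_pos hp hij).ne'
  have d1 : ρ t j * ρ t k * I {j, k} =
      (sqLen I (ρ t) j k - ρ t j ^ 2 - ρ t k ^ 2) / 2 := by
    unfold sqLen; ring
  have d2 : ρ t i * ρ t k * I {i, k} =
      (sqLen I (ρ t) i k - ρ t i ^ 2 - ρ t k ^ 2) / 2 := by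
    unfold sqLen; ring
  have d3 : ρ t i * ρ t j * I {i, j} =
      (sqLen I (ρ t) i j - ρ t i ^ 2 - ρ t j ^ 2) / 2 := by
    unfold sqLen; ring
  generalize sqLen I (ρ t) j k = s₁ at *
  generalize sqLen I (ρ t) i k = s₂ at *
  generalize sqLen I (ρ t) i j = s₃ at *
  rw [d1, d2, d3]
  unfold conduct
  field_simp
  ring

theorem wt_form_pos (hT : IsTriangulation Fc) (hI : ∀ e ∈ edges Fc, 0 ≤ I e)
    (h : ({i, j, k} : Finset (Fin N)) ∈ Fc) {r : Fin N → ℝ} (hr : r ∈ Omega Fc I)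
    (x y z : ℝ) :
    0 ≤ wt I r i j k * (x - y) ^ 2 + wt I r i k j * (x - z) ^ 2 + wt I r j k i * (y - z) ^ 2 ∧
    (wt I r i j k * (x - y) ^ 2 + wt I r i k j * (x - z) ^ 2 + wt I r j k i * (y - z) ^ 2 = 0 →
      x = y ∧ x = z) := by
  obtain ⟨hij, hik, hjk⟩ := inv_nonneg_of_face hT hI h
  obtain ⟨hp, htri⟩ := hr
  have t1 := sub_pos.2 (htri i j k h)
  have t2 := sub_pos.2 (htri j i k (face_swap₁₂ ▸ h))
  have t3 := sub_pos.2 (htri k i j (face_rot ▸ h))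
  rw [len_comm I _ j i] at t2
  rw [len_comm I _ k i, len_comm I _ k j] at t3
  have hx := len_pos hp hjk
  have hy := len_pos hp hik
  have hz := len_pos hp hij
  have hQ : 0 < heron (sqLen I r j k) (sqLen I r i k) (sqLen I r i j) := by
    rw [← len_sq hp hjk, ← len_sq hp hik, ← len_sq hp hij]
    rw [heron_factor]
    have := add_pos (add_pos hx hy) hz
    positivity
  have hi := hp i
  have hj := hp j
  have hk := hp k
  have f : ∀ a b : Fin N, 0 < r a → 0 < r b → 0 ≤ I {a, b} →
      0 < sqLen I r a b + r a ^ 2 - r b ^ 2 ∧ 0 < sqLen I r a b + r b ^ 2 - r a ^ 2 := by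
    intro a b ha hb hab
    have : 0 ≤ 2 * r a * r b * I {a, b} := by positivity
    have := pow_pos ha 2
    have := pow_pos hb 2
    unfold sqLen
    constructor <;> linarith
  have key := conduct_form_pos (sqLen_pos hp hjk) (sqLen_pos hp hik) (sqLen_pos hp hij)
    (f j k hj hk hjk).1 (f j k hj hk hjk).2 (f i k hi hk hik).1 (f i k hi hk hik).2
    (f i j hi hj hij).1 (f i j hi hj hij).2 hQ x y z
  have e : wt I r i j k * (x - y) ^ 2 + wt I r i k j * (x - z) ^ 2
      + wt I r j k i * (y - z) ^ 2 = (conduct (sqLen I r j k) (sqLen I r i k) (sqLen I r i j)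
      (r i ^ 2) (r j ^ 2) (r k ^ 2) * (x - y) ^ 2 + conduct (sqLen I r j k) (sqLen I r i j)
      (sqLen I r i k) (r i ^ 2) (r k ^ 2) (r j ^ 2) * (x - z) ^ 2
        + conduct (sqLen I r i k) (sqLen I r i j) (sqLen I r j k) (r j ^ 2) (r k ^ 2) (r i ^ 2)
        * (y - z) ^ 2) / √(heron (sqLen I r j k) (sqLen I r i k) (sqLen I r i j)) := by
    unfold wt
    rw [sqLen_comm I r k j, sqLen_comm I r k i, sqLen_comm I r j i,
      heron_swap₂₃ _ (sqLen I r i k), heron_swap₂₃ (sqLen I r i k), heron_swap₁₂]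
    ring
  have hs := Real.sqrt_pos.2 hQ
  rw [e]
  exact ⟨div_nonneg key.1 hs.le, fun h0 => key.2 ((div_eq_zero_iff.1 h0).resolve_right hs.ne')⟩

end Face

/-! ### The global Laplacian and its energy -/

/-- Symmetrising the energy over the three pairs inside each triple: symmetry of `g` in its first two
arguments gives a factor 2, the choice of a pair in the triple a factor 3. -/
theorem six_energy {n : Type*} [Fintype n] (g : n → n → n → ℝ)
    (hg : ∀ i j k, g i j k = g j i k) (x : n → ℝ) :
    6 * ∑ i, ∑ j, ∑ k, g i j k * (x i * (x i - x j)) =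
      ∑ i, ∑ j, ∑ k, (g i j k * (x i - x j) ^ 2 + g i k j * (x i - x k) ^ 2
        + g j k i * (x j - x k) ^ 2) := by
  have c1 : ∀ f : n → n → n → ℝ, ∑ i, ∑ j, ∑ k, f i k j = ∑ i, ∑ j, ∑ k, f i j k :=
    fun f => Finset.sum_congr rfl fun i _ => Finset.sum_comm
  have c2 : ∀ f : n → n → n → ℝ, ∑ i, ∑ j, ∑ k, f j i k = ∑ i, ∑ j, ∑ k, f i j k :=
    fun f => Finset.sum_comm
  have h2 : 2 * ∑ i, ∑ j, ∑ k, g i j k * (x i * (x i - x j)) =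
      ∑ i, ∑ j, ∑ k, g i j k * (x i - x j) ^ 2 := by
    have hs := c2 fun i j k => g i j k * (x i * (x i - x j))
    rw [two_mul]
    nth_rewrite 1 [← hs]
    simp only [← Finset.sum_add_distrib]
    refine Finset.sum_congr rfl fun i _ => Finset.sum_congr rfl fun j _ =>
      Finset.sum_congr rfl fun k _ => ?_
    rw [hg j i k]; ring
  have h3 := c1 fun i j k => g i j k * (x i - x j) ^ 2
  have h4 := c2 fun i j k => g i k j * (x i - x k) ^ 2
  simp only [Finset.sum_add_distrib]
  linarith

/-- The total weight of the edge `{i,j}`, summed over the faces containing it; it is zero when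
`{i,j}` is not an edge. -/
noncomputable def edgeWt (Fc : Finset (Finset (Fin N))) (I : Finset (Fin N) → ℝ)
    (r : Fin N → ℝ) (i j : Fin N) : ℝ :=
  ∑ k, if ({i, j, k} : Finset (Fin N)) ∈ Fc then wt I r i j k else 0

theorem edgeWt_symm (Fc : Finset (Finset (Fin N))) (I : Finset (Fin N) → ℝ)
    (r : Fin N → ℝ) (i j : Fin N) : edgeWt Fc I r i j = edgeWt Fc I r j i := by
  unfold edgeWt
  simp only [wt_symm I r j i, face_swap₁₂ (i := i) (j := j)]

/-- The differential of the curvature is the weighted graph Laplacian of `edgeWt`. -/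
theorem hasDerivAt_K {Fc : Finset (Finset (Fin N))} {I : Finset (Fin N) → ℝ}
    (hT : IsTriangulation Fc) (hI : ∀ e ∈ edges Fc, 0 ≤ I e)
    {ρ : ℝ → Fin N → ℝ} {v : Fin N → ℝ} {t : ℝ}
    (hρ : ρ t ∈ Omega Fc I) (hd : ∀ m, HasDerivAt (fun s => ρ s m) (ρ t m * v m) t)
    (i : Fin N) :
    HasDerivAt (fun s => K Fc I (ρ s) i) (∑ j, edgeWt Fc I (ρ t) i j * (v i - v j)) t := by
  have hterm : ∀ j k : Fin N, HasDerivAt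
      (fun s => if ({i, j, k} : Finset (Fin N)) ∈ Fc then
        Real.arccos (cosAng I (ρ s) i j k) else 0)
      ((if ({i, j, k} : Finset (Fin N)) ∈ Fc then wt I (ρ t) i j k else 0) * (v j - v i) +
        (if ({i, k, j} : Finset (Fin N)) ∈ Fc then wt I (ρ t) i k j else 0) * (v k - v i)) t := by
    intro j k
    rw [face_swap₂₃ (i := i) (j := j)]
    split_ifs with h
    · exact hasDerivAt_cosAng hT hI h hρ hd
    · simpa using hasDerivAt_const t (0 : ℝ)
  have hsum := ((HasDerivAt.fun_sum fun j (_ : j ∈ Finset.univ) =>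
    HasDerivAt.fun_sum fun k (_ : k ∈ Finset.univ) => hterm j k).const_mul (1 / 2)).const_sub (2 * π)
  refine hsum.congr_deriv ?_
  simp only [Finset.sum_add_distrib]
  -- The factor 1/2 in `K` cancels: both summands contribute the same after swapping `j` and `k`.
  rw [Finset.sum_comm (f := fun j k : Fin N =>
    (if ({i, k, j} : Finset (Fin N)) ∈ Fc then wt I (ρ t) i k j else 0) * (v k - v i))]
  simp only [← Finset.sum_mul]
  change -(1 / 2 * (∑ j, edgeWt Fc I (ρ t) i j * (v j - v i) +
    ∑ j, edgeWt Fc I (ρ t) i j * (v j - v i))) = _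
  have : ∑ j, edgeWt Fc I (ρ t) i j * (v i - v j) =
      -∑ j, edgeWt Fc I (ρ t) i j * (v j - v i) := by
    rw [← Finset.sum_neg_distrib]
    exact Finset.sum_congr rfl fun j _ => by ring
  rw [this]; ring

theorem hasDerivAt_rOf {r : Fin N → ℝ} (hr : ∀ m, 0 < r m) (j m : Fin N) :
    HasDerivAt (fun s => rOf (Function.update (fun m => Real.log (r m)) j s) m)
      (r m * (if m = j then 1 else 0)) (Real.log (r j)) := by
  unfold rOf
  by_cases h : m = j
  · subst h
    simpa [Real.exp_log (hr m)] using Real.hasDerivAt_exp (Real.log (r m))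
  · simpa [h] using hasDerivAt_const (Real.log (r j)) (Real.exp (Real.log (r m)))

/-- The Dirichlet energy of the Laplacian of `edgeWt`, regrouped by faces. -/
theorem energy_by_faces (Fc : Finset (Finset (Fin N))) (I : Finset (Fin N) → ℝ)
    (r x : Fin N → ℝ) :
    6 * ∑ i, x i * ∑ j, edgeWt Fc I r i j * (x i - x j) =
      ∑ i, ∑ j, ∑ k, if ({i, j, k} : Finset (Fin N)) ∈ Fc then
        wt I r i j k * (x i - x j) ^ 2 + wt I r i k j * (x i - x k) ^ 2
          + wt I r j k i * (x j - x k) ^ 2 else 0 := by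
  have h := six_energy
    (fun i j k => if ({i, j, k} : Finset (Fin N)) ∈ Fc then wt I r i j k else 0)
    (fun i j k => by simp only [face_swap₁₂ (i := i) (j := j), wt_symm I r j i]) x
  have e : ∑ i, x i * ∑ j, edgeWt Fc I r i j * (x i - x j) = ∑ i, ∑ j, ∑ k,
      (if ({i, j, k} : Finset (Fin N)) ∈ Fc then wt I r i j k else 0) *
        (x i * (x i - x j)) := by
    refine Finset.sum_congr rfl fun i _ => ?_
    rw [Finset.mul_sum]
    refine Finset.sum_congr rfl fun j _ => ?_
    rw [edgeWt, Finset.sum_mul, Finset.mul_sum]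
    exact Finset.sum_congr rfl fun k _ => by ring
  rw [e, h]
  refine Finset.sum_congr rfl fun i _ => Finset.sum_congr rfl fun j _ =>
    Finset.sum_congr rfl fun k _ => ?_
  rw [face_swap₂₃ (i := i) (j := j), face_rot (i := i) (j := j)]
  split_ifs <;> simp

theorem energy_nonneg {Fc : Finset (Finset (Fin N))} {I : Finset (Fin N) → ℝ}
    (hT : IsTriangulation Fc) (hI : ∀ e ∈ edges Fc, 0 ≤ I e) {r : Fin N → ℝ}
    (hr : r ∈ Omega Fc I) (x : Fin N → ℝ) :
    0 ≤ ∑ i, x i * ∑ j, edgeWt Fc I r i j * (x i - x j) := by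
  have h := energy_by_faces Fc I r x
  have : 0 ≤ 6 * ∑ i, x i * ∑ j, edgeWt Fc I r i j * (x i - x j) := by
    rw [h]
    refine Finset.sum_nonneg fun i _ => Finset.sum_nonneg fun j _ =>
      Finset.sum_nonneg fun k _ => ?_
    split_ifs with hf
    · exact (wt_form_pos hT hI hf hr _ _ _).1
    · rfl
  linarith

theorem eq_of_energy_zero {Fc : Finset (Finset (Fin N))} {I : Finset (Fin N) → ℝ}
    (hT : IsTriangulation Fc) (hI : ∀ e ∈ edges Fc, 0 ≤ I e) {r : Fin N → ℝ}
    (hr : r ∈ Omega Fc I) {x : Fin N → ℝ}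
    (h0 : ∑ i, x i * ∑ j, edgeWt Fc I r i j * (x i - x j) = 0) (i j : Fin N) : x i = x j := by
  have h := energy_by_faces Fc I r x
  rw [h0, mul_zero] at h
  have nn : ∀ i j k : Fin N, 0 ≤ if ({i, j, k} : Finset (Fin N)) ∈ Fc then
        wt I r i j k * (x i - x j) ^ 2 + wt I r i k j * (x i - x k) ^ 2
          + wt I r j k i * (x j - x k) ^ 2 else 0 := by
    intro i j k
    split_ifs with hf
    · exact (wt_form_pos hT hI hf hr _ _ _).1
    · rfl
  have hface : ∀ i j k : Fin N, ({i, j, k} : Finset (Fin N)) ∈ Fc → x i = x j := by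
    intro i j k hf
    have h1 := (Finset.sum_eq_zero_iff_of_nonneg fun i _ => Finset.sum_nonneg fun j _ =>
      Finset.sum_nonneg fun k _ => nn i j k).1 h.symm i (Finset.mem_univ _)
    have h2 := (Finset.sum_eq_zero_iff_of_nonneg fun j _ =>
      Finset.sum_nonneg fun k _ => nn i j k).1 h1 j (Finset.mem_univ _)
    have h3 := (Finset.sum_eq_zero_iff_of_nonneg fun k _ => nn i j k).1 h2 k (Finset.mem_univ _)
    rw [if_pos hf] at h3
    exact ((wt_form_pos hT hI hf hr _ _ _).2 h3).1
  have hedge : ∀ i j : Fin N, i ≠ j → ({i, j} : Finset (Fin N)) ∈ edges Fc → x i = x j := by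
    intro i j hij he
    obtain ⟨f, hf, hsub⟩ := Finset.mem_biUnion.1 he
    have hsub := (Finset.mem_powersetCard.1 hsub).1
    obtain ⟨k, hk⟩ : ∃ k, f \ {i, j} = {k} := by
      rw [← Finset.card_eq_one, Finset.card_sdiff_of_subset hsub, hT.card3 f hf,
        Finset.card_pair hij]
    have : ({i, j, k} : Finset (Fin N)) = f := by
      rw [← Finset.sdiff_union_of_subset hsub, hk]
      ext; simp; tauto
    exact hface i j k (this ▸ hf)
  obtain ⟨w⟩ := hT.conn.preconnected i j
  induction w with
  | nil => rfl
  | cons hadj _ ih =>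
    refine Eq.trans ?_ ih
    rw [SimpleGraph.fromRel_adj] at hadj
    obtain ⟨hne, h | h⟩ := hadj
    · exact hedge _ _ hne h
    · exact (hedge _ _ hne.symm h).symm

/-- the Jacobian L = (∂K_i/∂u_j) in the coordinates u = ln r is
symmetric, positive semi-definite, of rank N−1, with kernel exactly span{𝟙}. -/
theorem stmt2 {N : ℕ} (Fc : Finset (Finset (Fin N))) (hT : IsTriangulation Fc)
    (I : Finset (Fin N) → ℝ) (hI : ∀ e ∈ edges Fc, 0 ≤ I e)
    (r : Fin N → ℝ) (hr : r ∈ Omega Fc I)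
    (L : Matrix (Fin N) (Fin N) ℝ)
    (hL : ∀ i j : Fin N, L i j =
      deriv (fun s : ℝ =>
        K Fc I (rOf (Function.update (fun m => Real.log (r m)) j s)) i)
        (Real.log (r j))) :
    L.IsSymm ∧ L.PosSemidef ∧ L.rank = N - 1 ∧
      ∀ x : Fin N → ℝ, L.mulVec x = 0 ↔ ∃ t : ℝ, x = fun _ => t := by
  have hentry : ∀ i j, L i j = ∑ a, edgeWt Fc I r i a *
      ((if i = j then 1 else 0) - (if a = j then 1 else 0)) := by
    intro i j
    have hbase : rOf (Function.update (fun m => Real.log (r m)) j (Real.log (r j))) = r := by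
      rw [Function.update_eq_self]
      funext m
      exact Real.exp_log (hr.1 m)
    have hK := hasDerivAt_K hT hI (t := Real.log (r j))
      (ρ := fun s => rOf (Function.update (fun m => Real.log (r m)) j s))
      (v := fun m => if m = j then 1 else 0) (by simpa only [hbase] using hr)
      (by simpa only [hbase] using hasDerivAt_rOf hr.1 j) i
    rw [hL, hK.deriv]
    simp only [hbase]
  have hmul : ∀ (x : Fin N → ℝ) (i : Fin N), L.mulVec x i =
      ∑ a, edgeWt Fc I r i a * (x i - x a) := by
    intro x i
    simp only [Matrix.mulVec, dotProduct, hentry, Finset.sum_mul]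
    rw [Finset.sum_comm]
    refine Finset.sum_congr rfl fun a _ => ?_
    simp [mul_assoc, ← Finset.mul_sum, sub_mul]
  have hsymm : L.IsSymm := by
    ext i j
    rw [Matrix.transpose_apply]
    by_cases hij : i = j
    · rw [hij]
    · simp [hentry, hij, Ne.symm hij, edgeWt_symm Fc I r i j]
  have hquad : ∀ x : Fin N → ℝ, star x ⬝ᵥ L.mulVec x =
      ∑ i, x i * ∑ j, edgeWt Fc I r i j * (x i - x j) := by
    intro x
    simp only [dotProduct, hmul, star_trivial]
  have hker : ∀ x : Fin N → ℝ, L.mulVec x = 0 ↔ ∃ t : ℝ, x = fun _ => t := by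
    intro x
    constructor
    · intro hx
      have h0 := hquad x
      rw [hx, dotProduct_zero] at h0
      have i₀ := hT.conn.nonempty.some
      exact ⟨x i₀, funext fun i => eq_of_energy_zero hT hI hr h0.symm i i₀⟩
    · rintro ⟨t, rfl⟩
      funext i
      simp [hmul]
  refine ⟨hsymm, .of_dotProduct_mulVec_nonneg ?_ ?_, ?_, hker⟩
  · rw [Matrix.IsHermitian, Matrix.conjTranspose_eq_transpose_of_trivial]
    exact hsymm
  · intro x
    rw [hquad]
    exact energy_nonneg hT hI hr x
  · have hspan : LinearMap.ker L.mulVecLin = Submodule.span ℝ {fun _ => (1 : ℝ)} := by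
      ext x
      rw [LinearMap.mem_ker, Matrix.mulVecLin_apply, hker, Submodule.mem_span_singleton]
      exact exists_congr fun t => by
        rw [eq_comm]; simp [Pi.smul_def]
    have hne : (fun _ => 1 : Fin N → ℝ) ≠ 0 := fun h =>
      one_ne_zero (congrFun h hT.conn.nonempty.some)
    have hrn := LinearMap.finrank_range_add_finrank_ker L.mulVecLin
    rw [hspan, finrank_span_singleton hne, Module.finrank_fin_fun] at hrn
    rw [Matrix.rank]
    omega

end IDCP
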